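/- Let f be a continuous function on the unit circle bΔ. If for every polynomial P such that f + P is nonvanishing on bΔ, the winding number of f + P around 0 is nonnegative, then f extends continuously to the closed unit disc so as to be holomorphic on the open unit disc. -/

import Mathlib

open Polynomial Metric
open scoped Classical

/-- `g` (restricted to the unit circle) has winding number `n` around `0`:
there is a continuous argument lift `α` along `θ ↦ g (exp (iθ))` whose total
increase over `[0, 2π]` is `2πn`. -/
def HasWindingNumber (g : ℂ → ℂ) (n : ℤ) : Prop :=
  ∃ α : ℝ → ℝ, Continuous α ∧
    (∀ θ : ℝ, g (Complex.exp (θ * Complex.I)) =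
      (‖g (Complex.exp (θ * Complex.I))‖ : ℂ) * Complex.exp (α θ * Complex.I)) ∧
    α (2 * Real.pi) - α 0 = n * (2 * Real.pi)

/-- `f` on the unit circle extends continuously to the closed unit disc,
holomorphically on the open unit disc. -/
def ExtendsHolo (f : ℂ → ℂ) : Prop :=
  ∃ F : ℂ → ℂ, ContinuousOn F (closedBall 0 1) ∧
    DifferentiableOn ℂ F (ball 0 1) ∧ ∀ z ∈ sphere (0:ℂ) 1, F z = f z

/-- Multiplicity of a zero of a (holomorphic) function: least `n` with
nonvanishing `n`-th derivative. -/
noncomputable def holoOrder (f : ℂ → ℂ) (z : ℂ) : ℕ :=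
  sInf {n | iteratedDeriv n f z ≠ 0}

/-!
Suppose `∫ z b f ≠ 0` over the circle for some polynomial `b` with `‖1 - b‖ < 1` there. Modulo
polynomials vanishing at `0`, the real part of a continuous function is uniformly close to its mean,
so some `c z (b f + p)` has positive real part. Since `1 / b` is a uniform limit of polynomials, `p`
may be taken of the form `b P`, and then `f + P` winds `-1` times. Hence, under the winding
hypothesis, `∫ z b f = 0` for all `b` close to `1`, and by linearity for all polynomials `b`. This
says that `f` is orthogonal to the nonconstant part of the conjugate Herglotz–Riesz kernel, so that
the Poisson integral of `f` is holomorphic.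
-/

open Real (circleAverage)
open Filter Topology InnerProductSpace
open scoped ComplexConjugate

section WindingNumber

variable {f g : ℂ → ℂ} {m n : ℤ}

theorem hasWindingNumber_const (c : ℂ) : HasWindingNumber (fun _ => c) 0 :=
  ⟨fun _ => c.arg, continuous_const, fun _ => (Complex.norm_mul_exp_arg_mul_I c).symm, by simp⟩

theorem hasWindingNumber_id : HasWindingNumber (fun z => z) 1 :=
  ⟨id, continuous_id, fun θ => by simp [Complex.norm_exp_ofReal_mul_I], by simp⟩

theorem hasWindingNumber_zero_of_re_pos (hf : ContinuousOn f (sphere 0 1))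
    (hpos : ∀ z ∈ sphere (0 : ℂ) 1, 0 < (f z).re) : HasWindingNumber f 0 := by
  have hmem (θ : ℝ) : Complex.exp (θ * Complex.I) ∈ sphere (0 : ℂ) 1 := by simp
  have hcont : Continuous fun θ : ℝ => f (Complex.exp (θ * Complex.I)) :=
    hf.comp_continuous (by fun_prop) hmem
  refine ⟨fun θ => (f (Complex.exp (θ * Complex.I))).arg, ?_,
    fun θ => (Complex.norm_mul_exp_arg_mul_I _).symm, by simp⟩
  exact continuous_iff_continuousAt.2 fun θ =>
    ContinuousAt.comp (f := fun θ : ℝ => f (Complex.exp (θ * Complex.I)))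
      (Complex.continuousAt_arg (Or.inl (hpos _ (hmem θ)))) hcont.continuousAt

namespace HasWindingNumber

theorem congr (hf : HasWindingNumber f n) (hfg : Set.EqOn f g (sphere 0 1)) :
    HasWindingNumber g n := by
  obtain ⟨α, hα, hlift, hincr⟩ := hf
  refine ⟨α, hα, fun θ => ?_, hincr⟩
  rw [← hfg (show Complex.exp (θ * Complex.I) ∈ sphere (0 : ℂ) 1 by simp)]
  exact hlift θ

theorem mul (hf : HasWindingNumber f m) (hg : HasWindingNumber g n) :
    HasWindingNumber (fun z => f z * g z) (m + n) := by
  obtain ⟨α, hα, hf, hα'⟩ := hf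
  obtain ⟨β, hβ, hg, hβ'⟩ := hg
  refine ⟨fun θ => α θ + β θ, hα.add hβ, fun θ => ?_, ?_⟩
  · push_cast [norm_mul]
    rw [add_mul, Complex.exp_add, mul_mul_mul_comm, ← hf, ← hg]
  · push_cast
    linear_combination hα' + hβ'

theorem inv (hf : HasWindingNumber f n) : HasWindingNumber (fun z => (f z)⁻¹) (-n) := by
  obtain ⟨α, hα, hf, hα'⟩ := hf
  refine ⟨fun θ => -α θ, hα.neg, fun θ => ?_, ?_⟩
  · push_cast [norm_inv]
    rw [neg_mul, Complex.exp_neg, ← mul_inv, ← hf]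
  · push_cast
    linear_combination -hα'

theorem neg_of_re_mul_pos (hf : HasWindingNumber f n)
    (hfg : ContinuousOn (fun z => f z * g z) (sphere 0 1))
    (hpos : ∀ z ∈ sphere (0 : ℂ) 1, 0 < (f z * g z).re) : HasWindingNumber g (-n) := by
  have h := (hasWindingNumber_zero_of_re_pos hfg hpos).mul hf.inv
  rw [zero_add] at h
  refine h.congr fun z hz => ?_
  have hfz : f z ≠ 0 := fun h0 => by simpa [h0] using hpos z hz
  field_simp

end HasWindingNumber

end WindingNumber

section GeometricApproximation

variable {𝕜 : Type*} [NormedField 𝕜]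

theorem norm_inv_one_sub_sub_geom_sum_le {x : 𝕜} {r : ℝ} (hx : ‖x‖ ≤ r) (hr : r < 1) (n : ℕ) :
    ‖(1 - x)⁻¹ - ∑ i ∈ Finset.range n, x ^ i‖ ≤ r ^ n / (1 - r) := by
  have hlower : 1 - r ≤ ‖1 - x‖ := by
    have := norm_sub_norm_le 1 x
    rw [norm_one] at this
    linarith
  have hne : 1 - x ≠ 0 := norm_pos_iff.1 (by linarith)
  have hremainder : (1 - x)⁻¹ - ∑ i ∈ Finset.range n, x ^ i = x ^ n / (1 - x) := by
    rw [eq_div_iff hne, sub_mul, inv_mul_cancel₀ hne, geom_sum_mul_neg, sub_sub_cancel]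
  rw [hremainder, norm_div, norm_pow]
  have hr0 : 0 ≤ r := (norm_nonneg x).trans hx
  gcongr

theorem exists_polynomial_norm_div_sub_le {K : Set 𝕜} (hK : IsCompact K) (p : 𝕜[X]) {b : 𝕜[X]}
    (hb : ∀ z ∈ K, ‖1 - b.eval z‖ < 1) {ε : ℝ} (hε : 0 < ε) :
    ∃ q : 𝕜[X], ∀ z ∈ K, ‖p.eval z / b.eval z - q.eval z‖ ≤ ε := by
  rcases K.eq_empty_or_nonempty with rfl | hne
  · exact ⟨0, by simp⟩
  obtain ⟨z₀, hz₀, hmax⟩ : ∃ z₀ ∈ K, IsMaxOn (fun z => ‖1 - b.eval z‖) K z₀ :=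
    hK.exists_isMaxOn hne (by fun_prop)
  set r := ‖1 - b.eval z₀‖
  have hr : r < 1 := hb z₀ hz₀
  obtain ⟨M, hM⟩ := hK.exists_bound_of_continuousOn p.continuous.continuousOn
  have hlim : Tendsto (fun n : ℕ => M * (r ^ n / (1 - r))) atTop (𝓝 0) := by
    simpa using ((tendsto_pow_atTop_nhds_zero_of_lt_one (norm_nonneg _) hr).div_const
      (1 - r)).const_mul M
  obtain ⟨n, hn⟩ := (hlim.eventually_le_const hε).exists
  refine ⟨p * ∑ i ∈ Finset.range n, (1 - b) ^ i, fun z hz => ?_⟩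
  have hzr : ‖1 - b.eval z‖ ≤ r := hmax hz
  have hgeom := norm_inv_one_sub_sub_geom_sum_le hzr hr n
  rw [sub_sub_cancel] at hgeom
  calc ‖p.eval z / b.eval z - (p * ∑ i ∈ Finset.range n, (1 - b) ^ i).eval z‖
      = ‖p.eval z‖ * ‖(b.eval z)⁻¹ - ∑ i ∈ Finset.range n, (1 - b.eval z) ^ i‖ := by
        rw [← norm_mul, mul_sub, ← div_eq_mul_inv]
        simp [eval_finsetSum]
    _ ≤ M * (r ^ n / (1 - r)) :=
        mul_le_mul (hM z hz) hgeom (norm_nonneg _) ((norm_nonneg _).trans (hM z hz))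
    _ ≤ ε := hn

end GeometricApproximation

section HarmonicPolynomial

/-- The complex-valued harmonic polynomial `p + conj q`; on the unit circle these are exactly the
trigonometric polynomials. -/
noncomputable def harmonicPolynomial (p q : ℂ[X]) (z : ℂ) : ℂ :=
  p.eval z + conj (q.eval z)

theorem harmonicOnNhd_harmonicPolynomial (p q : ℂ[X]) (s : Set ℂ) :
    HarmonicOnNhd (harmonicPolynomial p q) s := by
  have hpoly (r : ℂ[X]) : HarmonicOnNhd (fun z => r.eval z) s :=
    fun z _ => (r.differentiable.analyticAt z).harmonicAt
  exact (hpoly p).add ((hpoly q).comp_CLM Complex.conjCLE.toContinuousLinearMap)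

theorem continuous_harmonicPolynomial (p q : ℂ[X]) : Continuous (harmonicPolynomial p q) :=
  p.continuous.add (Complex.continuous_conj.comp q.continuous)

theorem exists_harmonicPolynomial_eq_of_mem_span_fourier {T : ℝ} {g : C(AddCircle T, ℂ)}
    (hg : g ∈ Submodule.span ℂ (Set.range (@fourier T))) :
    ∃ p q : ℂ[X], ∀ x, g x = harmonicPolynomial p q (AddCircle.toCircle x) := by
  induction hg using Submodule.span_induction with
  | mem g hg =>
    obtain ⟨n, rfl⟩ := hg
    obtain ⟨m, rfl | rfl⟩ := n.eq_nat_or_neg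
    · exact ⟨X ^ m, 0, fun x => by
        simp [harmonicPolynomial, fourier_apply, AddCircle.toCircle_nsmul]⟩
    · exact ⟨0, X ^ m, fun x => by
        rw [fourier_neg]
        simp [harmonicPolynomial, fourier_apply, AddCircle.toCircle_nsmul]⟩
  | zero => exact ⟨0, 0, by simp [harmonicPolynomial]⟩
  | add g₁ g₂ _ _ ih₁ ih₂ =>
    obtain ⟨p₁, q₁, h₁⟩ := ih₁
    obtain ⟨p₂, q₂, h₂⟩ := ih₂
    refine ⟨p₁ + p₂, q₁ + q₂, fun x => ?_⟩
    simp only [ContinuousMap.add_apply, h₁, h₂, harmonicPolynomial, eval_add, map_add]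
    ring
  | smul a g _ ih =>
    obtain ⟨p, q, h⟩ := ih
    refine ⟨C a * p, C (conj a) * q, fun x => ?_⟩
    simp only [ContinuousMap.smul_apply, h, harmonicPolynomial, eval_mul, eval_C, map_mul,
      Complex.conj_conj, smul_eq_mul, mul_add]

theorem exists_harmonicPolynomial_near {f : ℂ → ℂ} (hf : ContinuousOn f (sphere 0 1)) {ε : ℝ}
    (hε : 0 < ε) :
    ∃ p q : ℂ[X], ∀ z ∈ sphere (0 : ℂ) 1, ‖f z - harmonicPolynomial p q z‖ < ε := by
  have : Fact (0 < 2 * Real.pi) := ⟨Real.two_pi_pos⟩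
  let F : C(AddCircle (2 * Real.pi), ℂ) :=
    ⟨fun x => f (AddCircle.toCircle x),
      hf.comp_continuous (continuous_subtype_val.comp AddCircle.continuous_toCircle)
        fun x => mem_sphere_zero_iff_norm.2 (Circle.norm_coe _)⟩
  have hF : F ∈ closure (Submodule.span ℂ (Set.range (@fourier (2 * Real.pi))) : Set _) := by
    rw [← Submodule.topologicalClosure_coe, span_fourier_closure_eq_top]
    trivial
  obtain ⟨g, hg, hdist⟩ := Metric.mem_closure_iff.1 hF ε hε
  obtain ⟨p, q, hpq⟩ := exists_harmonicPolynomial_eq_of_mem_span_fourier hg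
  refine ⟨p, q, fun z hz => ?_⟩
  obtain ⟨x, hx⟩ := (AddCircle.homeomorphCircle Real.two_pi_pos.ne').surjective ⟨z, hz⟩
  have hxz : (AddCircle.toCircle x : ℂ) = z := by
    rw [← AddCircle.homeomorphCircle_apply Real.two_pi_pos.ne', hx]
  rw [← hxz, ← hpq, ← dist_eq_norm]
  exact (ContinuousMap.dist_apply_le_dist x).trans_lt hdist

end HarmonicPolynomial

section CircleAverage

variable {E : Type*} [NormedAddCommGroup E] [NormedSpace ℝ E] {f : ℂ → E} {c : ℂ} {R : ℝ}

theorem norm_circleAverage_le_circleAverage_norm :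
    ‖circleAverage f c R‖ ≤ circleAverage (fun z => ‖f z‖) c R := by
  rw [circleAverage, circleAverage, norm_smul, smul_eq_mul, Real.norm_of_nonneg (by positivity)]
  gcongr
  exact intervalIntegral.norm_integral_le_integral_norm (by positivity)

theorem norm_circleAverage_le_of_norm_le {C : ℝ} (hC : ∀ z ∈ sphere c |R|, ‖f z‖ ≤ C) :
    ‖circleAverage f c R‖ ≤ C := by
  have hint := intervalIntegral.norm_integral_le_of_norm_le_const (a := 0) (b := 2 * Real.pi)
    fun θ _ => hC _ (circleMap_mem_sphere' c R θ)
  rw [circleAverage, norm_smul, Real.norm_of_nonneg (by positivity),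
    inv_mul_le_iff₀ Real.two_pi_pos]
  rwa [sub_zero, abs_of_pos Real.two_pi_pos, mul_comm C] at hint

end CircleAverage

section NegativeWinding

theorem exists_polynomial_abs_re_sub_mul_sub_circleAverage_lt {f : ℂ → ℂ}
    (hf : ContinuousOn f (sphere 0 1)) {ε : ℝ} (hε : 0 < ε) :
    ∃ p : ℂ[X], ∀ z ∈ sphere (0 : ℂ) 1,
      |(f z - z * p.eval z - circleAverage f 0 1).re| < ε := by
  obtain ⟨p, q, hpq⟩ := exists_harmonicPolynomial_near hf (half_pos hε)
  have hmean : ‖circleAverage f 0 1 - harmonicPolynomial p q 0‖ ≤ ε / 2 := by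
    have hpq_cont := (continuous_harmonicPolynomial p q).continuousOn (s := sphere 0 1)
    rw [← (harmonicOnNhd_harmonicPolynomial p q (closedBall 0 |1|)).circleAverage_eq,
      ← Real.circleAverage_fun_sub (hf.circleIntegrable zero_le_one)
        (hpq_cont.circleIntegrable zero_le_one)]
    exact norm_circleAverage_le_of_norm_le fun z hz => (hpq z (by simpa using hz)).le
  -- `p + conj q` and the polynomial `p + q` have the same real part.
  refine ⟨(p + q).divX, fun z hz => ?_⟩
  have hdivX : z * (p + q).divX.eval z = (p + q).eval z - (p + q).eval 0 := by
    conv_rhs => rw [← (p + q).X_mul_divX_add]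
    simp
  have hre : (f z - z * (p + q).divX.eval z - circleAverage f 0 1).re
      = (f z - harmonicPolynomial p q z - (circleAverage f 0 1 - harmonicPolynomial p q 0)).re := by
    rw [hdivX]
    simp only [harmonicPolynomial, eval_add, Complex.sub_re, Complex.add_re, Complex.conj_re]
    ring
  calc |(f z - z * (p + q).divX.eval z - circleAverage f 0 1).re|
      ≤ ‖f z - harmonicPolynomial p q z - (circleAverage f 0 1 - harmonicPolynomial p q 0)‖ :=
        hre ▸ Complex.abs_re_le_norm _
    _ ≤ ‖f z - harmonicPolynomial p q z‖ + ‖circleAverage f 0 1 - harmonicPolynomial p q 0‖ :=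
        norm_sub_le _ _
    _ < ε / 2 + ε / 2 := add_lt_add_of_lt_of_le (hpq z hz) hmean
    _ = ε := add_halves ε

variable {f : ℂ → ℂ} {b : ℂ[X]}

theorem exists_polynomial_re_pos (hf : ContinuousOn f (sphere 0 1))
    (hb : ∀ z ∈ sphere (0 : ℂ) 1, ‖1 - b.eval z‖ < 1)
    (hmoment : circleAverage (fun z => z * b.eval z * f z) 0 1 ≠ 0) :
    ∃ (c : ℂ) (P : ℂ[X]), ∀ z ∈ sphere (0 : ℂ) 1,
      0 < (c * z * b.eval z * (f z + P.eval z)).re := by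
  set A := circleAverage (fun z => z * b.eval z * f z) 0 1 with hA
  have hmean : circleAverage (fun z => A⁻¹ • (z * b.eval z * f z)) 0 1 = 1 := by
    rw [Real.circleAverage_fun_smul, ← hA, smul_eq_mul, inv_mul_cancel₀ hmoment]
  have hcont : ContinuousOn (fun z => A⁻¹ • (z * b.eval z * f z)) (sphere 0 1) := by fun_prop
  obtain ⟨p, hp⟩ :=
    exists_polynomial_abs_re_sub_mul_sub_circleAverage_lt hcont (ε := 1 / 2) (by norm_num)
  rw [hmean] at hp
  obtain ⟨q, hq⟩ :=
    exists_polynomial_norm_div_sub_le (isCompact_sphere 0 1) p hb (ε := 1 / 4) (by norm_num)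
  refine ⟨A⁻¹, -(C A * q), fun z hz => ?_⟩
  have hz1 : ‖z‖ = 1 := by simpa using hz
  have hb0 : b.eval z ≠ 0 := fun h0 => by simpa [h0] using hb z hz
  have hsplit : A⁻¹ * z * b.eval z * (f z + (-(C A * q)).eval z)
      = 1 + (A⁻¹ • (z * b.eval z * f z) - z * p.eval z - 1)
        + z * b.eval z * (p.eval z / b.eval z - q.eval z) := by
    simp only [eval_neg, eval_mul, eval_C, smul_eq_mul]
    field_simp
    ring
  have herror : ‖z * b.eval z * (p.eval z / b.eval z - q.eval z)‖ ≤ 1 / 2 := by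
    have hb2 : ‖b.eval z‖ ≤ 2 := by
      have := norm_sub_norm_le (b.eval z) 1
      rw [norm_one, norm_sub_rev] at this
      linarith [hb z hz]
    rw [norm_mul, norm_mul, hz1, one_mul]
    linarith [mul_le_mul hb2 (hq z hz) (norm_nonneg _) zero_le_two]
  rw [hsplit, Complex.add_re, Complex.add_re, Complex.one_re]
  linarith [(abs_lt.1 (hp z hz)).1, (abs_le.1 ((Complex.abs_re_le_norm _).trans herror)).1]

theorem exists_polynomial_hasWindingNumber_neg_one (hf : ContinuousOn f (sphere 0 1))
    (hb : ∀ z ∈ sphere (0 : ℂ) 1, ‖1 - b.eval z‖ < 1)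
    (hmoment : circleAverage (fun z => z * b.eval z * f z) 0 1 ≠ 0) :
    ∃ P : ℂ[X], (∀ z ∈ sphere (0 : ℂ) 1, f z + P.eval z ≠ 0) ∧
      HasWindingNumber (fun z => f z + P.eval z) (-1) := by
  obtain ⟨c, P, hpos⟩ := exists_polynomial_re_pos hf hb hmoment
  have hb_re : ∀ z ∈ sphere (0 : ℂ) 1, 0 < (b.eval z).re := fun z hz => by
    have := (Complex.re_le_norm _).trans_lt (hb z hz)
    rw [Complex.sub_re, Complex.one_re] at this
    linarith
  have hwind : HasWindingNumber (fun z => c * z * b.eval z) 1 := by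
    simpa using ((hasWindingNumber_const c).mul hasWindingNumber_id).mul
      (hasWindingNumber_zero_of_re_pos b.continuous.continuousOn hb_re)
  exact ⟨P, fun z hz h0 => by simpa [h0] using hpos z hz,
    hwind.neg_of_re_mul_pos (by fun_prop) hpos⟩

theorem circleAverage_mul_polynomial_mul_eq_zero (hf : ContinuousOn f (sphere 0 1))
    (hnear : ∀ b : ℂ[X], (∀ z ∈ sphere (0 : ℂ) 1, ‖1 - b.eval z‖ < 1) →
      circleAverage (fun z => z * b.eval z * f z) 0 1 = 0) (p : ℂ[X]) :
    circleAverage (fun z => z * p.eval z * f z) 0 1 = 0 := by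
  obtain ⟨M, hM⟩ := (isCompact_sphere (0 : ℂ) 1).exists_bound_of_continuousOn
    p.continuous.continuousOn
  have hM0 : 0 ≤ M := (norm_nonneg _).trans (hM 1 (by simp))
  set a : ℂ := (((M + 1)⁻¹ : ℝ) : ℂ) with ha
  have ha0 : a ≠ 0 := by
    rw [ha, Complex.ofReal_ne_zero]
    positivity
  have hone := hnear 1 (by simp)
  have hadd := hnear (1 + C a * p) fun z hz => by
    simp only [eval_add, eval_one, eval_mul, eval_C, sub_add_cancel_left, norm_neg, norm_mul, ha,
      Complex.norm_real, Real.norm_of_nonneg (show 0 ≤ (M + 1)⁻¹ by positivity)]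
    rw [inv_mul_lt_one₀ (by positivity)]
    linarith [hM z hz]
  have hsplit : (fun z => z * (1 + C a * p).eval z * f z)
      = fun z => z * (1 : ℂ[X]).eval z * f z + a • (z * p.eval z * f z) := by
    ext z
    simp only [eval_add, eval_mul, eval_C, smul_eq_mul]
    ring
  rw [hsplit, Real.circleAverage_fun_add (ContinuousOn.circleIntegrable zero_le_one (by fun_prop))
    (ContinuousOn.circleIntegrable zero_le_one (by fun_prop)), hone, zero_add,
    Real.circleAverage_fun_smul] at hadd
  exact (smul_eq_zero.1 hadd).resolve_left ha0

end NegativeWinding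

section PoissonKernel

variable {E : Type*} [NormedAddCommGroup E] [NormedSpace ℝ E] {f : ℂ → E} {c w z : ℂ} {R : ℝ}

theorem poissonKernel_nonneg (hw : w ∈ ball c R) (hz : z ∈ sphere c R) :
    0 ≤ poissonKernel c w z := by
  have hwz : ‖w - c‖ ≤ ‖z - c‖ := by
    rw [mem_sphere_iff_norm.1 hz]
    exact (mem_ball_iff_norm.1 hw).le
  rw [poissonKernel_def]
  exact div_nonneg (sub_nonneg.2 (by gcongr)) (by positivity)

theorem continuousOn_poissonKernel_sphere (hw : w ∈ ball c R) :
    ContinuousOn (poissonKernel c w) (sphere c |R|) := by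
  rw [poissonKernel_eq_re_herglotzRieszKernel]
  exact Complex.continuous_re.comp_continuousOn (continuousOn_herglotzRieszKernel_sphere hw)

theorem circleAverage_poissonKernel_smul_of_harmonicOnNhd [CompleteSpace E]
    (hf : HarmonicOnNhd f (closedBall c R)) (hw : w ∈ ball c R) :
    circleAverage (poissonKernel c w • f) c R = f w := by
  have hR : |R| = R := abs_of_pos (pos_of_mem_ball hw)
  have hf_sphere : ContinuousOn f (sphere c |R|) :=
    hf.continuousOn.mono (hR.symm ▸ sphere_subset_closedBall)
  have hint : CircleIntegrable (poissonKernel c w • f) c R :=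
    ((continuousOn_poissonKernel_sphere hw).smul hf_sphere).circleIntegrable'
  refine SeparatingDual.eq_iff_forall_dual_eq (R := ℝ) |>.2 fun L => ?_
  have hL : L ∘ (poissonKernel c w • f) = poissonKernel c w • (L ∘ f) :=
    funext fun z => L.map_smul _ _
  rw [← L.circleAverage_comp_comm hint, hL, (hf.comp_CLM L).circleAverage_poissonKernel_smul hw,
    Function.comp_apply]

theorem norm_circleAverage_poissonKernel_smul_le {C : ℝ} (hf : CircleIntegrable f c R)
    (hw : w ∈ ball c R) (hC : ∀ z ∈ sphere c R, ‖f z‖ ≤ C) :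
    ‖circleAverage (poissonKernel c w • f) c R‖ ≤ C := by
  have hP := continuousOn_poissonKernel_sphere hw
  have hR : |R| = R := abs_of_pos (pos_of_mem_ball hw)
  calc ‖circleAverage (poissonKernel c w • f) c R‖
      ≤ circleAverage (fun z => ‖(poissonKernel c w • f) z‖) c R :=
        norm_circleAverage_le_circleAverage_norm
    _ ≤ circleAverage (poissonKernel c w • fun _ => C) c R := by
        refine Real.circleAverage_mono (hf.continuousOn_smul hP).norm
          (hP.smul continuousOn_const).circleIntegrable' fun z hz => ?_
        rw [hR] at hz
        have hnonneg := poissonKernel_nonneg hw hz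
        rw [Pi.smul_apply', Pi.smul_apply', norm_smul, Real.norm_of_nonneg hnonneg, smul_eq_mul]
        gcongr
        exact hC z hz
    _ = C := (harmonicOnNhd_const C).circleAverage_poissonKernel_smul hw

end PoissonKernel

section PoissonExtension

/-- The solution of the Dirichlet problem on the unit disc with boundary values `f`: the Poisson
integral of `f` in the open disc, and `f` itself elsewhere. -/
noncomputable def poissonExtension (f : ℂ → ℂ) : ℂ → ℂ :=
  (ball 0 1).piecewise (fun w => circleAverage (poissonKernel 0 w • f) 0 1) f

variable {f g : ℂ → ℂ} {w : ℂ}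

theorem poissonExtension_of_mem_ball (hw : w ∈ ball 0 1) :
    poissonExtension f w = circleAverage (poissonKernel 0 w • f) 0 1 :=
  Set.piecewise_eq_of_mem _ _ _ hw

theorem poissonExtension_of_mem_sphere (hw : w ∈ sphere 0 1) : poissonExtension f w = f w :=
  Set.piecewise_eq_of_notMem _ _ _ fun hball => sphere_disjoint_ball.le_bot ⟨hw, hball⟩

theorem norm_poissonExtension_sub_le_of_harmonicOnNhd {C : ℝ} (hf : ContinuousOn f (sphere 0 1))
    (hg : HarmonicOnNhd g (closedBall 0 1)) (hC : ∀ z ∈ sphere (0 : ℂ) 1, ‖f z - g z‖ ≤ C)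
    (hw : w ∈ closedBall 0 1) : ‖poissonExtension f w - g w‖ ≤ C := by
  rw [← ball_union_sphere] at hw
  rcases hw with hw | hw
  · have hfi : CircleIntegrable f 0 1 := hf.circleIntegrable zero_le_one
    have hgi : CircleIntegrable g 0 1 :=
      (hg.continuousOn.mono sphere_subset_closedBall).circleIntegrable zero_le_one
    have hP := continuousOn_poissonKernel_sphere hw
    rw [poissonExtension_of_mem_ball hw, ← circleAverage_poissonKernel_smul_of_harmonicOnNhd hg hw,
      ← Real.circleAverage_sub (hfi.continuousOn_smul hP) (hgi.continuousOn_smul hP), ← smul_sub]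
    exact norm_circleAverage_poissonKernel_smul_le (hfi.sub hgi) hw hC
  · rw [poissonExtension_of_mem_sphere hw]
    exact hC w hw

theorem continuousOn_poissonExtension (hf : ContinuousOn f (sphere 0 1)) :
    ContinuousOn (poissonExtension f) (closedBall 0 1) := by
  refine continuousOn_of_uniform_approx_of_continuousOn fun u hu => ?_
  obtain ⟨ε, hε, hεu⟩ := Metric.mem_uniformity_dist.1 hu
  obtain ⟨p, q, hpq⟩ := exists_harmonicPolynomial_near hf (half_pos hε)
  refine ⟨harmonicPolynomial p q, (continuous_harmonicPolynomial p q).continuousOn,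
    fun w hw => hεu ?_⟩
  rw [dist_eq_norm]
  exact (norm_poissonExtension_sub_le_of_harmonicOnNhd hf (harmonicOnNhd_harmonicPolynomial p q _)
    (fun z hz => (hpq z hz).le) hw).trans_lt (half_lt_self hε)

end PoissonExtension

section VanishingMoments

variable {f : ℂ → ℂ}

theorem circleAverage_mul_div_mul_eq_zero (hf : ContinuousOn f (sphere 0 1))
    (hmoment : ∀ p : ℂ[X], circleAverage (fun z => z * p.eval z * f z) 0 1 = 0) (p : ℂ[X])
    {b : ℂ[X]} (hb : ∀ z ∈ sphere (0 : ℂ) 1, ‖1 - b.eval z‖ < 1) :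
    circleAverage (fun z => z * (p.eval z / b.eval z) * f z) 0 1 = 0 := by
  obtain ⟨M, hM⟩ := (isCompact_sphere (0 : ℂ) 1).exists_bound_of_continuousOn hf
  have hM0 : 0 ≤ M := (norm_nonneg _).trans (hM 1 (by simp))
  have hb0 : ∀ z ∈ sphere (0 : ℂ) 1, b.eval z ≠ 0 := fun z hz h0 => by simpa [h0] using hb z hz
  have hcont : ContinuousOn (fun z => z * (p.eval z / b.eval z) * f z) (sphere 0 1) := by
    fun_prop (disch := assumption)
  refine norm_le_zero_iff.1 (le_of_forall_pos_le_add fun ε hε => ?_)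
  obtain ⟨q, hq⟩ := exists_polynomial_norm_div_sub_le (isCompact_sphere 0 1) p hb
    (show 0 < ε / (M + 1) by positivity)
  have hsub : circleAverage (fun z => z * (p.eval z / b.eval z) * f z) 0 1
      = circleAverage (fun z => z * (p.eval z / b.eval z) * f z - z * q.eval z * f z) 0 1 := by
    rw [Real.circleAverage_fun_sub (hcont.circleIntegrable zero_le_one)
      (ContinuousOn.circleIntegrable zero_le_one (by fun_prop)), hmoment q, sub_zero]
  rw [zero_add, hsub]
  refine norm_circleAverage_le_of_norm_le fun z hz => ?_
  rw [abs_one] at hz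
  have hz1 : ‖z‖ = 1 := by simpa using hz
  calc ‖z * (p.eval z / b.eval z) * f z - z * q.eval z * f z‖
      = ‖p.eval z / b.eval z - q.eval z‖ * ‖f z‖ := by
        rw [← sub_mul, ← mul_sub, norm_mul, norm_mul, hz1, one_mul]
    _ ≤ ε / (M + 1) * (M + 1) := by
        gcongr
        · exact hq z hz
        · linarith [hM z hz]
    _ = ε := div_mul_cancel₀ ε (by positivity)

theorem conj_herglotzRieszKernel_of_mem_sphere {w z : ℂ} (hw : w ∈ ball 0 1)
    (hz : z ∈ sphere 0 1) :
    conj (herglotzRieszKernel 0 w z) = 1 + z * (2 * conj w / (1 - conj w * z)) := by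
  have hz1 : ‖z‖ = 1 := by simpa using hz
  have hz0 : z ≠ 0 := norm_ne_zero_iff.1 (by simp [hz1])
  have hne : 1 - conj w * z ≠ 0 := fun h0 => by
    have hnorm : ‖conj w * z‖ = 1 := by rw [← sub_eq_zero.1 h0, norm_one]
    rw [norm_mul, RCLike.norm_conj, hz1, mul_one] at hnorm
    exact (mem_ball_zero_iff.1 hw).ne hnorm
  rw [herglotzRieszKernel_def]
  simp only [sub_zero, map_div₀, map_add, map_sub, ← Complex.inv_eq_conj hz1]
  rw [← mul_div_mul_right _ _ hz0, add_mul, sub_mul, inv_mul_cancel₀ hz0]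
  field_simp
  ring

theorem circleAverage_conj_herglotzRieszKernel_mul (hf : ContinuousOn f (sphere 0 1))
    (hmoment : ∀ p : ℂ[X], circleAverage (fun z => z * p.eval z * f z) 0 1 = 0) {w : ℂ}
    (hw : w ∈ ball 0 1) :
    circleAverage (fun z => conj (herglotzRieszKernel 0 w z) * f z) 0 1
      = circleAverage f 0 1 := by
  set b : ℂ[X] := 1 - C (conj w) * X with hb_def
  have hb : ∀ z ∈ sphere (0 : ℂ) 1, ‖1 - b.eval z‖ < 1 := fun z hz => by
    simpa [hb_def, mem_sphere_zero_iff_norm.1 hz] using hw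
  have hb0 : ∀ z ∈ sphere (0 : ℂ) 1, b.eval z ≠ 0 := fun z hz h0 => by simpa [h0] using hb z hz
  have hsplit : Set.EqOn (fun z => conj (herglotzRieszKernel 0 w z) * f z)
      (fun z => f z + z * ((C (2 * conj w)).eval z / b.eval z) * f z) (sphere 0 |1|) :=
    fun z hz => by
      rw [abs_one] at hz
      simp only [conj_herglotzRieszKernel_of_mem_sphere hw hz, hb_def, eval_C, eval_sub, eval_one,
        eval_mul, eval_X, add_mul, one_mul]
  have hcont : ContinuousOn (fun z => z * ((C (2 * conj w)).eval z / b.eval z) * f z)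
      (sphere 0 1) := by
    fun_prop (disch := assumption)
  rw [Real.circleAverage_congr_sphere hsplit, Real.circleAverage_fun_add
    (hf.circleIntegrable zero_le_one) (hcont.circleIntegrable zero_le_one),
    circleAverage_mul_div_mul_eq_zero hf hmoment _ hb, add_zero]

theorem circleAverage_poissonKernel_smul_eq (hf : ContinuousOn f (sphere 0 1))
    (hmoment : ∀ p : ℂ[X], circleAverage (fun z => z * p.eval z * f z) 0 1 = 0) {w : ℂ}
    (hw : w ∈ ball 0 1) :
    circleAverage (poissonKernel 0 w • f) 0 1
      = (1 / 2 : ℂ) * (circleAverage (fun z => herglotzRieszKernel 0 w z • f z) 0 1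
        + circleAverage f 0 1) := by
  have hfi : CircleIntegrable f 0 1 := hf.circleIntegrable zero_le_one
  have hH := continuousOn_herglotzRieszKernel_sphere hw
  have hHf : CircleIntegrable (fun z => herglotzRieszKernel 0 w z • f z) 0 1 :=
    hfi.continuousOn_smul hH
  have hconjHf : CircleIntegrable (fun z => conj (herglotzRieszKernel 0 w z) * f z) 0 1 :=
    hfi.continuousOn_smul (Complex.continuous_conj.comp_continuousOn hH)
  rw [← circleAverage_conj_herglotzRieszKernel_mul hf hmoment hw,
    ← Real.circleAverage_fun_add hHf hconjHf, ← smul_eq_mul, ← Real.circleAverage_fun_smul]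
  congr 1
  ext z
  rw [poissonKernel_eq_re_herglotzRieszKernel]
  simp only [Pi.smul_apply', Function.comp_apply, Complex.real_smul, smul_eq_mul,
    Complex.re_eq_add_conj]
  ring

theorem extendsHolo_of_circleAverage_eq_zero (hf : ContinuousOn f (sphere 0 1))
    (hmoment : ∀ p : ℂ[X], circleAverage (fun z => z * p.eval z * f z) 0 1 = 0) :
    ExtendsHolo f := by
  refine ⟨poissonExtension f, continuousOn_poissonExtension hf, ?_,
    fun z => poissonExtension_of_mem_sphere⟩
  have hherglotz := differentiableOn_circleAverage_herglotzRieszKernel_smul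
    (hf.circleIntegrable zero_le_one)
  refine ((hherglotz.add_const (circleAverage f 0 1)).const_mul (1 / 2 : ℂ)).congr fun w hw => ?_
  rw [poissonExtension_of_mem_ball hw, circleAverage_poissonKernel_smul_eq hf hmoment hw]

end VanishingMoments

theorem stmt5_general (f : ℂ → ℂ) (hf : ContinuousOn f (sphere (0 : ℂ) 1))
    (h : ∀ P : Polynomial ℂ, (∀ z ∈ sphere (0 : ℂ) 1, f z + P.eval z ≠ 0) →
      ¬ HasWindingNumber (fun z => f z + P.eval z) (-1)) :
    ExtendsHolo f := by
  refine extendsHolo_of_circleAverage_eq_zero hf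
    (circleAverage_mul_polynomial_mul_eq_zero hf fun b hb => ?_)
  by_contra hmoment
  obtain ⟨P, hP, hwind⟩ := exists_polynomial_hasWindingNumber_neg_one hf hb hmoment
  exact h P hP hwind

theorem stmt5 (f : ℂ → ℂ) (hf : ContinuousOn f (sphere (0:ℂ) 1))
    (h : ∀ P : Polynomial ℂ, (∀ z ∈ sphere (0:ℂ) 1, f z + P.eval z ≠ 0) →
      ∀ n : ℤ, HasWindingNumber (fun z => f z + P.eval z) n → 0 ≤ n) :
    ExtendsHolo f :=
  stmt5_general f hf fun P hP hwind => absurd (h P hP _ hwind) (by norm_num)
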